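/- arXiv:2003.08707 — 7 statements merged into one kernel-verified Lean document; each statement's English description precedes it below -/
import Mathlib

section
/- Let N be a natural number with N > 3 and let a be an element of ZMod N satisfying a · (1 − a) = 1. Then a is a unit of ZMod N and the multiplicative order of a in ZMod N is exactly 6. -/
/-- If `N > 3` and `a : ZMod N` satisfies the type-II condition `a * (1 - a) = 1`,
then `a` is a unit and its multiplicative order is exactly `6` (Lemma 1). -/
theorem typeII_isUnit_and_orderOf_eq_six (N : ℕ) (hN : 3 < N) (a : ZMod N)
    (ha : a * (1 - a) = 1) : IsUnit a ∧ orderOf a = 6 := by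
  have h3 : a ^ 3 = -1 := by linear_combination (-a - 1) * ha
  have key : ∀ k : ℕ, 0 < k → k ≤ 3 → ((k : ℕ) : ZMod N) ≠ 0 := by
    intro k hk hk3 h
    rw [ZMod.natCast_eq_zero_iff] at h
    have := Nat.le_of_dvd hk h
    omega
  refine ⟨IsUnit.of_mul_eq_one _ ha, ?_⟩
  apply orderOf_eq_of_pow_and_pow_div_prime (by norm_num)
  · linear_combination (a ^ 3 - 1) * h3
  · intro p hp hd h
    have hp' : p = 2 ∨ p = 3 := by
      have : p ∣ 2 * 3 := hd
      rcases (Nat.Prime.dvd_mul hp).1 this with h | h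
      · exact Or.inl ((Nat.prime_dvd_prime_iff_eq hp Nat.prime_two).1 h)
      · exact Or.inr ((Nat.prime_dvd_prime_iff_eq hp Nat.prime_three).1 h)
    rcases hp' with rfl | rfl
    · norm_num at h
      apply key 2 (by norm_num) (by norm_num)
      push_cast
      linear_combination h3 - h
    · norm_num at h
      apply key 3 (by norm_num) (by norm_num)
      push_cast
      have h2 : a = 2 := by linear_combination ha + h
      rw [h2] at h
      linear_combination h
end

section
/- Let N, m, n, k be natural numbers with m ≥ 2, n ≥ 1, k ≥ 2, let a be a unit of ZMod N with a^(m−1) = 1, let γ : Fin n → ZMod N, and let P^{a,I} be the associated type-I IRS exponent matrix. Let (r, c) be a cycle of length 2k in P^{a,I} and let l be an integer with 1 ≤ l ≤ m−1. Then θ_{P^{a,I}}(r, c) = 0 if and only if θ_{P^{a,I}}(π^{I,l} ∘ r, c) = 0 (Theorem 1). -/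
/-- A cycle of length `2k` in an `m × n` exponent matrix, encoded by index functions
`r : ℕ → Fin m` and `c : ℕ → Fin n` on the positions `0, 1, …, 2k - 1`, with the successor
of position `s` being `(s + 1) % (2 * k)`: at even positions the row stays and the column
changes, at odd positions the row changes and the column stays. -/
def IsCycle {m n : ℕ} (k : ℕ) (r : ℕ → Fin m) (c : ℕ → Fin n) : Prop :=
  ∀ s < 2 * k,
    (s % 2 = 0 → r s = r ((s + 1) % (2 * k)) ∧ c s ≠ c ((s + 1) % (2 * k))) ∧
    (s % 2 = 1 → r s ≠ r ((s + 1) % (2 * k)) ∧ c s = c ((s + 1) % (2 * k)))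

/-- The cycle sum `θ_P(r, c) = ∑_{s = 0}^{2k - 1} (-1)^s P(r(s), c(s))` of a length-`2k`
cycle in an exponent matrix `P`. -/
def cycleSum {N m n : ℕ} (k : ℕ) (P : Fin m → Fin n → ZMod N)
    (r : ℕ → Fin m) (c : ℕ → Fin n) : ZMod N :=
  ∑ s ∈ Finset.range (2 * k), (-1 : ZMod N) ^ s * P (r s) (c s)

/-- Theorem 1: for a type-I IRS exponent matrix `P^{a,I}` (built from a unit `a` of
`ZMod N` with `a ^ (m - 1) = 1` and coefficients `γ`), a cycle `(r, c)` of length `2k`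
has zero cycle sum if and only if the row-permuted cycle `(π^{I,l} ∘ r, c)` has zero
cycle sum, for every `1 ≤ l ≤ m - 1`. -/
theorem typeI_cycleSum_eq_zero_iff (N m n k : ℕ) (hm : 2 ≤ m) (hn : 1 ≤ n) (hk : 2 ≤ k)
    (a : ZMod N) (ha : IsUnit a) (haord : a ^ (m - 1) = 1)
    (γ : Fin n → ZMod N) (P : Fin m → Fin n → ZMod N)
    (hP : ∀ (i : Fin m) (j : Fin n),
      P i j = if (i : ℕ) = 0 then 0 else a ^ ((i : ℕ) - 1) * γ j)
    (r : ℕ → Fin m) (c : ℕ → Fin n) (hcyc : IsCycle k r c)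
    (l : ℕ) (hl1 : 1 ≤ l) (hl2 : l ≤ m - 1)
    (π : Fin m → Fin m)
    (hπ0 : ∀ i : Fin m, (i : ℕ) = 0 → π i = i)
    (hπ : ∀ i : Fin m, 1 ≤ (i : ℕ) →
      (π i : ℕ) = if (i : ℕ) + l ≤ m - 1 then (i : ℕ) + l else (i : ℕ) + l - (m - 1)) :
    cycleSum k P r c = 0 ↔ cycleSum k P (fun s => π (r s)) c = 0 := by
  have key : ∀ (i : Fin m) (j : Fin n), P (π i) j = a ^ l * P i j := by
    intro i j
    rw [hP, hP]
    by_cases hi : (i : ℕ) = 0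
    · rw [hπ0 i hi]
      simp [hi]
    · have h := hπ i (by omega)
      have hlt := i.isLt
      have hne : ((π i : Fin m) : ℕ) ≠ 0 := by
        rw [h]; split_ifs <;> omega
      rw [if_neg hne, if_neg hi, ← mul_assoc, ← pow_add]
      congr 1
      rw [h]
      split_ifs with h2
      · congr 1; omega
      · have e : l + ((i : ℕ) - 1) = ((i : ℕ) + l - (m - 1) - 1) + (m - 1) := by omega
        rw [e, pow_add, haord, mul_one]
  have hs : cycleSum k P (fun s => π (r s)) c = a ^ l * cycleSum k P r c := by
    unfold cycleSum
    rw [Finset.mul_sum]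
    refine Finset.sum_congr rfl fun s _ => ?_
    rw [key]
    ring
  rw [hs, (ha.pow l).mul_right_eq_zero]
end

section
/- Let N, m, n, k be natural numbers with m ≥ 2, n ≥ 1, k ≥ 2, let a be a unit of ZMod N with a^(m−1) = 1, let γ : Fin n → ZMod N, and let P^{a,I} be the associated type-I IRS exponent matrix. Then for every cycle (r, c) of length 2k in P^{a,I} and every integer l with 1 ≤ l ≤ m−1, one has θ_{P^{a,I}}(π^{I,l} ∘ r, c) = a^l · θ_{P^{a,I}}(r, c) in ZMod N. -/
/-- For a type-I IRS exponent matrix `P^{a,I}` (built from a unit `a` of `ZMod N` with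
`a ^ (m - 1) = 1` and coefficients `γ`) and any cycle `(r, c)` of length `2k`, the cycle
sum of the row-permuted cycle `(π^{I,l} ∘ r, c)` equals `a ^ l` times the cycle sum of
`(r, c)`, for every `1 ≤ l ≤ m - 1`. -/
theorem typeI_cycleSum_perm_eq_pow_mul (N m n k : ℕ) (hm : 2 ≤ m) (hn : 1 ≤ n) (hk : 2 ≤ k)
    (a : ZMod N) (ha : IsUnit a) (haord : a ^ (m - 1) = 1)
    (γ : Fin n → ZMod N) (P : Fin m → Fin n → ZMod N)
    (hP : ∀ (i : Fin m) (j : Fin n),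
      P i j = if (i : ℕ) = 0 then 0 else a ^ ((i : ℕ) - 1) * γ j)
    (r : ℕ → Fin m) (c : ℕ → Fin n) (hcyc : IsCycle k r c)
    (l : ℕ) (hl1 : 1 ≤ l) (hl2 : l ≤ m - 1)
    (π : Fin m → Fin m)
    (hπ0 : ∀ i : Fin m, (i : ℕ) = 0 → π i = i)
    (hπ : ∀ i : Fin m, 1 ≤ (i : ℕ) →
      (π i : ℕ) = if (i : ℕ) + l ≤ m - 1 then (i : ℕ) + l else (i : ℕ) + l - (m - 1)) :
    cycleSum k P (fun s => π (r s)) c = a ^ l * cycleSum k P r c := by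
  have key : ∀ (i : Fin m) (j : Fin n), P (π i) j = a ^ l * P i j := by
    intro i j
    by_cases hi : (i : ℕ) = 0
    · rw [hπ0 i hi, hP, if_pos hi, mul_zero]
    · have h := hπ i (by omega)
      have hlt := i.isLt
      rw [hP (π i), hP i, if_neg hi, ← mul_assoc, ← pow_add]
      split_ifs at h with h1
      · rw [if_neg (by omega), h]
        congr 2
        omega
      · rw [if_neg (by omega), h]
        have e : l + ((i : ℕ) - 1) = ((i : ℕ) + l - (m - 1) - 1) + (m - 1) := by omega
        rw [e, pow_add, haord, mul_one]
  unfold cycleSum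
  rw [Finset.mul_sum]
  refine Finset.sum_congr rfl fun s _ => ?_
  rw [key]
  ring
end

section
/- Let N, n, k be natural numbers with N > 3, n ≥ 1, k ≥ 2, let a be an element of ZMod N satisfying a · (1 − a) = 1, let γ : Fin n → ZMod N, and let P^{a,II} be the associated type-II IRS exponent matrix. Let (r, c) be a cycle of length 2k in P^{a,II} and let l ∈ {1, 2}. Then θ_{P^{a,II}}(r, c) = 0 if and only if θ_{P^{a,II}}(π^{II,l} ∘ r, c) = 0 (Theorem 2). -/
/-- The row permutation `π^{II,1} : Fin 3 → Fin 3`, `i ↦ (i + 2) mod 3`. -/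
def piII : Fin 3 → Fin 3 := fun i => ⟨((i : ℕ) + 2) % 3, by omega⟩

theorem aux_alt {N n : ℕ} (k : ℕ) (hk : 2 ≤ k) (r : ℕ → Fin 3) (c : ℕ → Fin n)
    (hcyc : IsCycle k r c) (γ : Fin n → ZMod N) :
    ∑ s ∈ Finset.range (2 * k), (-1 : ZMod N) ^ s * γ (c s) = 0 := by
  have key : ∀ m, m < k →
      ∑ s ∈ Finset.range (2 * m + 1), (-1 : ZMod N) ^ s * γ (c s) = γ (c 0) := by
    intro m
    induction m with
    | zero => intro _; simp
    | succ m ih =>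
      intro hm
      have h := ((hcyc (2 * m + 1) (by omega)).2 (by omega)).2
      rw [Nat.mod_eq_of_lt (by omega)] at h
      rw [show 2 * (m + 1) + 1 = 2 * m + 1 + 1 + 1 by ring, Finset.sum_range_succ,
        Finset.sum_range_succ, ih (by omega), h]
      ring
  obtain ⟨m, rfl⟩ : ∃ m, k = m + 1 := ⟨k - 1, by omega⟩
  have h := ((hcyc (2 * m + 1) (by omega)).2 (by omega)).2
  rw [show (2 * m + 1 + 1) % (2 * (m + 1)) = 0 by
    rw [show 2 * m + 1 + 1 = 2 * (m + 1) by ring, Nat.mod_self]] at h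
  rw [show 2 * (m + 1) = 2 * m + 1 + 1 by ring, Finset.sum_range_succ, key m (by omega), h,
    pow_succ, pow_mul]
  simp

theorem aux_step {N n : ℕ} (k : ℕ) (a : ZMod N) (ha : a * (1 - a) = 1)
    (γ : Fin n → ZMod N) (P : Fin 3 → Fin n → ZMod N)
    (hP : ∀ j : Fin n, P 0 j = 0 ∧ P 1 j = γ j ∧ P 2 j = a * γ j)
    (r : ℕ → Fin 3) (c : ℕ → Fin n)
    (h0 : ∑ s ∈ Finset.range (2 * k), (-1 : ZMod N) ^ s * γ (c s) = 0) :
    cycleSum k P r c = 0 ↔ cycleSum k P (fun s => piII (r s)) c = 0 := by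
  have hpt : ∀ i j, P (piII i) j = a * γ j - a * P i j := by
    intro i j
    obtain ⟨p0, p1, p2⟩ := hP j
    fin_cases i
    · change P 2 j = a * γ j - a * P 0 j
      rw [p0, p2]; ring
    · change P 0 j = a * γ j - a * P 1 j
      rw [p0, p1]; ring
    · change P 1 j = a * γ j - a * P 2 j
      rw [p1, p2]; linear_combination (-γ j) * ha
  have hs : cycleSum k P (fun s => piII (r s)) c = - a * cycleSum k P r c := by
    have : cycleSum k P (fun s => piII (r s)) c =
        a * (∑ s ∈ Finset.range (2 * k), (-1 : ZMod N) ^ s * γ (c s))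
          - a * cycleSum k P r c := by
      unfold cycleSum
      rw [Finset.mul_sum, Finset.mul_sum, ← Finset.sum_sub_distrib]
      refine Finset.sum_congr rfl fun s _ => ?_
      rw [hpt]; ring
    rw [this, h0]; ring
  rw [hs]
  constructor
  · intro h; rw [h, mul_zero]
  · intro h
    linear_combination (-(1 - a)) * h - cycleSum k P r c * ha

/-- Theorem 2: for a type-II IRS exponent matrix `P^{a,II}` (built from `a : ZMod N`,
`N > 3`, satisfying `a * (1 - a) = 1`, and coefficients `γ`), a cycle `(r, c)` of length
`2k` has zero cycle sum if and only if the row-permuted cycle `(π^{II,l} ∘ r, c)` has zero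
cycle sum, for `l ∈ {1, 2}`. -/
theorem typeII_cycleSum_eq_zero_iff (N n k : ℕ) (hN : 3 < N) (hn : 1 ≤ n) (hk : 2 ≤ k)
    (a : ZMod N) (ha : a * (1 - a) = 1)
    (γ : Fin n → ZMod N) (P : Fin 3 → Fin n → ZMod N)
    (hP : ∀ j : Fin n, P 0 j = 0 ∧ P 1 j = γ j ∧ P 2 j = a * γ j)
    (r : ℕ → Fin 3) (c : ℕ → Fin n) (hcyc : IsCycle k r c)
    (l : ℕ) (hl : l = 1 ∨ l = 2) :
    cycleSum k P r c = 0 ↔ cycleSum k P (fun s => piII^[l] (r s)) c = 0 := by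
  have h0 := aux_alt k hk r c hcyc γ
  have h1 := aux_step k a ha γ P hP r c h0
  rcases hl with rfl | rfl
  · exact h1
  · exact h1.trans (aux_step k a ha γ P hP (fun s => piII (r s)) c h0)
end

section
/- Let N, n, k be natural numbers with N > 3, n ≥ 1, k ≥ 2, let a be an element of ZMod N satisfying a · (1 − a) = 1, let γ : Fin n → ZMod N, and let P^{a,II} be the associated type-II IRS exponent matrix. Then for every cycle (r, c) of length 2k in P^{a,II}, one has θ_{P^{a,II}}(π^{II,1} ∘ r, c) = −a · θ_{P^{a,II}}(r, c) in ZMod N. -/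
/-- For a type-II IRS exponent matrix `P^{a,II}` (built from `a : ZMod N`, `N > 3`,
satisfying `a * (1 - a) = 1`, and coefficients `γ`) and any cycle `(r, c)` of length `2k`,
the cycle sum of the row-permuted cycle `(π^{II,1} ∘ r, c)` equals `-a` times the cycle
sum of `(r, c)`. -/
theorem typeII_cycleSum_perm_eq_neg_mul (N n k : ℕ) (hN : 3 < N) (hn : 1 ≤ n) (hk : 2 ≤ k)
    (a : ZMod N) (ha : a * (1 - a) = 1)
    (γ : Fin n → ZMod N) (P : Fin 3 → Fin n → ZMod N)
    (hP : ∀ j : Fin n, P 0 j = 0 ∧ P 1 j = γ j ∧ P 2 j = a * γ j)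
    (r : ℕ → Fin 3) (c : ℕ → Fin n) (hcyc : IsCycle k r c) :
    cycleSum k P (fun s => piII (r s)) c = -a * cycleSum k P r c := by
  have key : ∀ i j, P (piII i) j = a * γ j - a * P i j := by
    intro i j
    obtain ⟨h0, h1, h2⟩ := hP j
    have e0 : piII 0 = 2 := by decide
    have e1 : piII 1 = 0 := by decide
    have e2 : piII 2 = 1 := by decide
    fin_cases i
    · change P (piII 0) j = a * γ j - a * P 0 j
      rw [e0, h0, h2]; ring
    · change P (piII 1) j = a * γ j - a * P 1 j
      rw [e1, h0, h1]; ring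
    · change P (piII 2) j = a * γ j - a * P 2 j
      rw [e2, h1, h2]; linear_combination (-γ j) * ha
  have split : ∀ (g : ℕ → ZMod N) (l : ℕ), ∑ s ∈ Finset.range (2 * l), (-1 : ZMod N) ^ s * g s
      = ∑ i ∈ Finset.range l, (g (2 * i) - g (2 * i + 1)) := by
    intro g l
    induction l with
    | zero => simp
    | succ l ih =>
      rw [Nat.mul_succ, Finset.sum_range_succ, Finset.sum_range_succ, ih,
        Finset.sum_range_succ, pow_succ, pow_mul]
      simp
      ring
  have zero : ∑ s ∈ Finset.range (2 * k), (-1 : ZMod N) ^ s * γ (c s) = 0 := by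
    rw [split (fun s => γ (c s))]
    have : ∀ i ∈ Finset.range k, (γ (c (2 * i)) - γ (c (2 * i + 1)))
        = γ (c ((2 * i) % (2 * k))) - γ (c ((2 * (i + 1)) % (2 * k))) := by
      intro i hi
      have hi := Finset.mem_range.mp hi
      have h := ((hcyc (2 * i + 1) (by omega)).2 (by omega)).2
      rw [h, Nat.mod_eq_of_lt (by omega : 2 * i < 2 * k)]
      rfl
    rw [Finset.sum_congr rfl this,
      Finset.sum_range_sub' (fun i => γ (c ((2 * i) % (2 * k))))]
    simp
  unfold cycleSum
  have : ∀ s ∈ Finset.range (2 * k), (-1 : ZMod N) ^ s * P (piII (r s)) (c s)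
      = a * ((-1 : ZMod N) ^ s * γ (c s)) + -a * ((-1 : ZMod N) ^ s * P (r s) (c s)) := by
    intro s _
    rw [key]; ring
  rw [Finset.sum_congr rfl this, Finset.sum_add_distrib, ← Finset.mul_sum, ← Finset.mul_sum,
    zero]
  ring
end

section
/- Let N be a natural number with N > 3 and let a be an element of ZMod N satisfying a · (1 − a) = 1. Let P : Fin 3 → Fin 2 → ZMod N be the exponent matrix with first column all zeros and second column (0, 1, a), i.e., P(i, 0) = 0 for all i, P(0, 1) = 0, P(1, 1) = 1, P(2, 1) = a. Then for every k with 2 ≤ k ≤ 5 and every cycle (r, c) of length 2k in P, θ_P(r, c) ≠ 0 in ZMod N (Proposition 1: every 3×2 type-II IRS exponent matrix satisfies Fossorier's girth-12 condition). -/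
theorem aux4 {N : ℕ} (hN : 3 < N) (a : ZMod N) (ha : a * (1 - a) = 1) (v : Fin 3 → ZMod N)
    (v0 : v 0 = 0) (v1 : v 1 = 1) (v2 : v 2 = a) (x y z w : Fin 3)
    (h1 : x ≠ y) (h2 : y ≠ z) (h3 : z ≠ w) (h4 : w ≠ x) :
    v x - v y + v z - v w ≠ 0 := by
  have n2 : (2 : ZMod N) ≠ 0 := by
    intro h
    have : ((2 : ℕ) : ZMod N) = 0 := by exact_mod_cast h
    rw [ZMod.natCast_eq_zero_iff] at this
    have := Nat.le_of_dvd (by norm_num) this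
    omega
  have n3 : (3 : ZMod N) ≠ 0 := by
    intro h
    have : ((3 : ℕ) : ZMod N) = 0 := by exact_mod_cast h
    rw [ZMod.natCast_eq_zero_iff] at this
    have := Nat.le_of_dvd (by norm_num) this
    omega
  have m1 : 2 * a ≠ 0 := fun h => n2 (by linear_combination (1 - a) * h - 2 * ha)
  have m2 : 2 * (a - 1) ≠ 0 := fun h => n2 (by linear_combination (-a) * h - 2 * ha)
  have m3 : 1 + a ≠ 0 := fun h => n3 (by linear_combination (2 - a) * h - ha)
  have m4 : 2 - a ≠ 0 := fun h => n3 (by linear_combination (1 + a) * h - ha)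
  have m5 : 2 * a - 1 ≠ 0 := fun h => n3 (by linear_combination (-(2 * a - 1)) * h - 4 * ha)
  intro h
  fin_cases x <;> fin_cases y <;> first | exact absurd rfl h1 | skip
  all_goals fin_cases z <;> first | exact absurd rfl h2 | skip
  all_goals fin_cases w <;> first | exact absurd rfl h3 | exact absurd rfl h4 | skip
  all_goals
    simp only [Fin.zero_eta, Fin.mk_one, Fin.reduceFinMk, v0, v1, v2] at h
    first
    | exact n2 (by linear_combination h)
    | exact n2 (by linear_combination -h)
    | exact m1 (by linear_combination h)
    | exact m1 (by linear_combination -h)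
    | exact m2 (by linear_combination h)
    | exact m2 (by linear_combination -h)
    | exact m3 (by linear_combination h)
    | exact m3 (by linear_combination -h)
    | exact m4 (by linear_combination h)
    | exact m4 (by linear_combination -h)
    | exact m5 (by linear_combination h)
    | exact m5 (by linear_combination -h)

theorem aux2 {N : ℕ} (hN : 3 < N) (a : ZMod N) (ha : a * (1 - a) = 1) (v : Fin 3 → ZMod N)
    (v0 : v 0 = 0) (v1 : v 1 = 1) (v2 : v 2 = a) (x y : Fin 3) (h1 : x ≠ y) :
    v x - v y ≠ 0 := fun h =>
  aux4 hN a ha v v0 v1 v2 x y x y h1 h1.symm h1 h1.symm (by linear_combination 2 * h)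

theorem fin2_cases (x : Fin 2) : x = 0 ∨ x = 1 := by
  fin_cases x <;> simp

/-- Proposition 1: for `N > 3` and `a : ZMod N` with `a * (1 - a) = 1`, the `3 × 2`
type-II IRS exponent matrix with first column all zeros and second column `(0, 1, a)`
has no cycle of length `4`, `6`, `8` or `10` with zero cycle sum; by Fossorier's
criterion the lifted QC-LDPC code has girth `12`. -/
theorem typeII_three_by_two_girth_twelve (N : ℕ) (hN : 3 < N) (a : ZMod N)
    (ha : a * (1 - a) = 1)
    (P : Fin 3 → Fin 2 → ZMod N)
    (hP0 : ∀ i : Fin 3, P i 0 = 0)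
    (hP01 : P 0 1 = 0) (hP11 : P 1 1 = 1) (hP21 : P 2 1 = a) :
    ∀ k : ℕ, 2 ≤ k → k ≤ 5 →
      ∀ (r : ℕ → Fin 3) (c : ℕ → Fin 2), IsCycle k r c → cycleSum k P r c ≠ 0 := by
  intro k hk2 hk5 r c hc
  have h0 := hc 0
  have h1 := hc 1
  have h2 := hc 2
  have h3 := hc 3
  have h4 := hc 4
  have h5 := hc 5
  have h6 := hc 6
  have h7 := hc 7
  have h8 := hc 8
  have h9 := hc 9
  clear hc
  interval_cases k
  · norm_num at h0 h1 h2 h3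
    have key := aux2 hN a ha (fun i => P i 1) hP01 hP11 hP21 (r 0) (r 2)
      (by rw [h0.1]; exact h1.1)
    simp only [cycleSum, Finset.sum_range_succ, Finset.sum_range_zero, Nat.reduceMul]
    rw [← h2.1, ← h0.1]
    rcases fin2_cases (c 0) with e | e
    · have e1 : c 1 = 1 := by have := h0.2; omega
      have e2 : c 2 = 1 := by rw [← h1.2, e1]
      have e3 : c 3 = 0 := by rw [h3.2, e]
      rw [e, e1, e2, e3, hP0, hP0]
      exact fun h => key (by linear_combination -h)
    · have e1 : c 1 = 0 := by have := h0.2; omega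
      have e2 : c 2 = 0 := by rw [← h1.2, e1]
      have e3 : c 3 = 1 := by rw [h3.2, e]
      rw [e, e1, e2, e3, hP0, hP0]
      exact fun h => key (by linear_combination h)
  · norm_num at h0 h1 h2 h3 h4 h5
    exfalso
    omega
  · norm_num at h0 h1 h2 h3 h4 h5 h6 h7
    have key := aux4 hN a ha (fun i => P i 1) hP01 hP11 hP21 (r 0) (r 2) (r 4) (r 6)
      (by rw [h0.1]; exact h1.1) (by rw [h2.1]; exact h3.1) (by rw [h4.1]; exact h5.1)
      (by rw [h6.1]; exact h7.1)
    simp only [cycleSum, Finset.sum_range_succ, Finset.sum_range_zero, Nat.reduceMul]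
    rw [← h2.1, ← h0.1, ← h4.1, ← h6.1]
    rcases fin2_cases (c 0) with e | e
    · have e1 : c 1 = 1 := by have := h0.2; omega
      have e2 : c 2 = 1 := by rw [← h1.2, e1]
      have e3 : c 3 = 0 := by have := h2.2; omega
      have e4 : c 4 = 0 := by rw [← h3.2, e3]
      have e5 : c 5 = 1 := by have := h4.2; omega
      have e6 : c 6 = 1 := by rw [← h5.2, e5]
      have e7 : c 7 = 0 := by rw [h7.2, e]
      rw [e, e1, e2, e3, e4, e5, e6, e7]
      simp only [hP0]
      exact fun h => key (by linear_combination -h)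
    · have e1 : c 1 = 0 := by have := h0.2; omega
      have e2 : c 2 = 0 := by rw [← h1.2, e1]
      have e3 : c 3 = 1 := by have := h2.2; omega
      have e4 : c 4 = 1 := by rw [← h3.2, e3]
      have e5 : c 5 = 0 := by have := h4.2; omega
      have e6 : c 6 = 0 := by rw [← h5.2, e5]
      have e7 : c 7 = 1 := by rw [h7.2, e]
      rw [e, e1, e2, e3, e4, e5, e6, e7]
      simp only [hP0]
      exact fun h => key (by linear_combination h)
  · norm_num at h0 h1 h2 h3 h4 h5 h6 h7 h8 h9
    exfalso
    omega
end

section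
/- Let N be a natural number with N > 3 and let a, b be elements of ZMod N with a ≠ b, a · (1 − a) = 1, b · (1 − b) = 1, and such that the submonoid of ZMod N generated by a equals the submonoid generated by b. Define v_a, v_b : Fin 3 → ZMod N by v_x(0) = 0, v_x(1) = 1, v_x(2) = x. Then there exists a bijection σ : Fin 3 ≃ Fin 3 with σ(0) = 0 such that v_b(i) = a⁵ · v_a(σ(i)) for all i in Fin 3 (Proposition 3: the second column of the type-II matrix built from b is a unit multiple of a row permutation of the second column built from a). -/
theorem pow_mod_orderOf_aux {M : Type*} [Monoid M] (a : M) (h : a ^ 6 = 1) (k : ℕ) :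
    a ^ (k % 6) = a ^ k := by
  conv_rhs => rw [← Nat.mod_add_div k 6, pow_add, pow_mul, h, one_pow, mul_one]


/-- Proposition 3: let `N > 3` and let `a ≠ b` be elements of `ZMod N` both satisfying the
type-II condition `x * (1 - x) = 1` and generating the same submonoid of `ZMod N`. Then the
type-II second column `v_b = (0, 1, b)` equals `a ^ 5` times a row permutation (fixing row
`0`) of the type-II second column `v_a = (0, 1, a)`. -/
theorem typeII_second_columns_perm (N : ℕ) (hN : 3 < N) (a b : ZMod N) (hab : a ≠ b)
    (ha : a * (1 - a) = 1) (hb : b * (1 - b) = 1)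
    (hgen : Submonoid.powers a = Submonoid.powers b)
    (va vb : Fin 3 → ZMod N)
    (hva0 : va 0 = 0) (hva1 : va 1 = 1) (hva2 : va 2 = a)
    (hvb0 : vb 0 = 0) (hvb1 : vb 1 = 1) (hvb2 : vb 2 = b) :
    ∃ σ : Fin 3 ≃ Fin 3, σ 0 = 0 ∧ ∀ i : Fin 3, vb i = a ^ 5 * va (σ i) := by
  have small : ∀ m : ℕ, 0 < m → m ≤ 3 → (m : ZMod N) ≠ 0 := by
    intro m h0 h3 h
    rw [ZMod.natCast_eq_zero_iff] at h
    have := Nat.le_of_dvd h0 h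
    omega
  have h1 : (1 : ZMod N) ≠ 0 := by simpa using small 1 (by norm_num) (by norm_num)
  have h2 : (2 : ZMod N) ≠ 0 := by simpa using small 2 (by norm_num) (by norm_num)
  have h3 : (3 : ZMod N) ≠ 0 := by simpa using small 3 (by norm_num) (by norm_num)
  have e2 : a ^ 2 = a - 1 := by linear_combination -ha
  have e3 : a ^ 3 = -1 := by linear_combination (a + 1) * e2
  have e4 : a ^ 4 = -a := by linear_combination a * e3
  have e5 : a ^ 5 = 1 - a := by linear_combination a ^ 2 * e3 - e2
  have e6 : a ^ 6 = 1 := by linear_combination (a ^ 3 - 1) * e3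
  have hbm : b ∈ Submonoid.powers a := by
    rw [hgen]
    exact Submonoid.mem_powers b
  obtain ⟨k, hk⟩ := hbm
  have hk' : a ^ (k % 6) = b := by
    have hk2 : a ^ k = b := hk
    rw [← hk2, pow_mod_orderOf_aux a e6 k]
  have hb5 : b = 1 - a := by
    have hlt : k % 6 < 6 := Nat.mod_lt _ (by norm_num)
    generalize k % 6 = r at hk' hlt
    interval_cases r
    · exact absurd (by linear_combination -hb + b * hk') h1
    · exact absurd (by simpa using hk') hab
    · rw [e2] at hk'
      subst hk'
      exact absurd (by linear_combination (-a) * hb + (a - 2) * ha) h2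
    · rw [e3] at hk'
      subst hk'
      exact absurd (by linear_combination -hb) h3
    · rw [e4] at hk'
      subst hk'
      exact absurd (by linear_combination (-(1 - a)) * hb + (-1 - a) * ha) h2
    · rw [← hk', e5]
  refine ⟨Equiv.swap 1 2, by decide, ?_⟩
  intro i
  fin_cases i
  · have : Equiv.swap (1 : Fin 3) 2 0 = 0 := by decide
    simp [this, hva0, hvb0]
  · simp only [Fin.mk_one, Equiv.swap_apply_left, hva2, hvb1]
    linear_combination -e6
  · have : Equiv.swap (1 : Fin 3) 2 2 = 1 := by decide
    simp only [Fin.reduceFinMk, this, hva1, hvb2]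
    rw [hb5, e5, mul_one]
end
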